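/- arXiv:2309.09049 — 2 statements merged into one kernel-verified Lean document; each statement's English description precedes it below -/
import Mathlib

section
/- Let G be a group, let σ and Fr be automorphisms of G, and let q be a positive integer such that Fr⁻¹ ∘ σ ∘ Fr = σ^q. Fix g ∈ G and set n_σ := g⁻¹·σ(g) and n_Fr := g⁻¹·Fr(g), and for x ∈ G set N_q(x) := x·σ(x)·σ²(x)···σ^{q−1}(x). Then Fr(N_q(n_σ)) = n_Fr⁻¹ · n_σ · σ(n_Fr). -/
/-- Let `G` be a group with automorphisms `σ` and `Fr` and a positive integer `q`
such that `Fr⁻¹ ∘ σ ∘ Fr = σ^q`.  For `g ∈ G` set `n_σ = g⁻¹·σ(g)`,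
`n_Fr = g⁻¹·Fr(g)`, and `N_q(x) = x·σ(x)·σ²(x)···σ^{q-1}(x)`.  Then
`Fr(N_q(n_σ)) = n_Fr⁻¹ · n_σ · σ(n_Fr)`. -/
theorem frobenius_norm_formula {G : Type*} [Group G] (σ Fr : MulAut G)
    (q : ℕ) (hq : 0 < q) (hcomm : Fr⁻¹ * σ * Fr = σ ^ q) (g : G) :
    Fr (((List.range q).map (fun i => (σ ^ i) (g⁻¹ * σ g))).prod) =
      (g⁻¹ * Fr g)⁻¹ * (g⁻¹ * σ g) * σ (g⁻¹ * Fr g) := by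
  have key : ∀ n : ℕ, ((List.range n).map (fun i => (σ ^ i) (g⁻¹ * σ g))).prod =
      g⁻¹ * (σ ^ n) g := by
    intro n
    induction n with
    | zero => simp
    | succ k ih =>
      rw [List.range_succ, List.map_append, List.prod_append, ih, pow_succ]
      simp [MulAut.mul_apply, mul_assoc]
  rw [key, ← hcomm]
  simp [MulAut.mul_apply, mul_assoc]
end

section
/- Let G be a group, let σ and Fr be automorphisms of G, and let q be a positive integer such that Fr⁻¹ ∘ σ ∘ Fr = σ^q. Fix g ∈ G and set n_σ := g⁻¹·σ(g) and n_Fr := g⁻¹·Fr(g), and for x ∈ G set N_q(x) := x·σ(x)·σ²(x)···σ^{q−1}(x). If y ∈ G satisfies Fr(N_q(n_σ)) = y⁻¹ · n_σ · σ(y), then the element u := n_Fr·y⁻¹ satisfies n_σ · σ(u) · n_σ⁻¹ = u. In other words, the equation Fr(N_q(n_σ)) = y⁻¹·n_σ·σ(y) determines the element n_Fr uniquely up to left multiplication by an element fixed under the map x ↦ n_σ·σ(x)·n_σ⁻¹. -/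
/-- Setup as in the Frobenius norm formula: `G` a group, `σ, Fr` automorphisms,
`q` a positive integer with `Fr⁻¹ ∘ σ ∘ Fr = σ^q`, and for `g ∈ G` put
`n_σ = g⁻¹·σ(g)`, `n_Fr = g⁻¹·Fr(g)`, `N_q(x) = x·σ(x)···σ^{q-1}(x)`.
If `y ∈ G` satisfies `Fr(N_q(n_σ)) = y⁻¹·n_σ·σ(y)`, then `u := n_Fr·y⁻¹`
satisfies `n_σ·σ(u)·n_σ⁻¹ = u`; i.e. the equation determines `n_Fr` up to left
multiplication by a fixed point of `x ↦ n_σ·σ(x)·n_σ⁻¹`. -/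
theorem frobenius_norm_uniqueness {G : Type*} [Group G] (σ Fr : MulAut G)
    (q : ℕ) (hq : 0 < q) (hcomm : Fr⁻¹ * σ * Fr = σ ^ q) (g y : G)
    (hy : Fr (((List.range q).map (fun i => (σ ^ i) (g⁻¹ * σ g))).prod) =
      y⁻¹ * (g⁻¹ * σ g) * σ y) :
    (g⁻¹ * σ g) * σ ((g⁻¹ * Fr g) * y⁻¹) * (g⁻¹ * σ g)⁻¹ =
      (g⁻¹ * Fr g) * y⁻¹ := by
  have tel : ∀ n : ℕ, ((List.range n).map (fun i => (σ ^ i) (g⁻¹ * σ g))).prod =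
      g⁻¹ * (σ ^ n) g := by
    intro n
    induction n with
    | zero => simp
    | succ k ih =>
      rw [List.range_succ, List.map_append, List.prod_append, ih]
      simp [pow_succ, MulAut.mul_apply, mul_assoc]
  have h1 : Fr ((σ ^ q) g) = σ (Fr g) := by
    rw [← hcomm]
    simp [MulAut.mul_apply]
  rw [tel, map_mul, h1, map_inv] at hy
  have h2 : σ (Fr g) = Fr g * (y⁻¹ * (g⁻¹ * σ g) * σ y) := by
    rw [← hy, mul_inv_cancel_left]
  simp only [map_mul, map_inv, h2]
  group
end
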